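/- Let ρ and σ be density operators on a finite-dimensional complex Hilbert space with supp(ρ) ⊆ supp(σ), and let α > 1. Then D_α^𝕄(ρ‖σ) = sup over operators T with 0 ≤ T ≤ 𝟙, T not orthogonal to ρ (i.e. Tr[ρT] > 0), of { (α/(α−1)) log Tr[ρT] − log Tr[σ T^{α/(α−1)}] }. -/

import Mathlib

open Matrix
open scoped ComplexOrder Kronecker

noncomputable section

/-- Real power of a Hermitian matrix via functional calculus on its support
(Moore–Penrose convention); junk value `0` for non-Hermitian input. -/
def Matrix.rpowH {ι : Type*} [Fintype ι] [DecidableEq ι] (A : Matrix ι ι ℂ) (p : ℝ) :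
    Matrix ι ι ℂ :=
  if hA : A.IsHermitian then
    (hA.eigenvectorUnitary : Matrix ι ι ℂ) *
      Matrix.diagonal (fun i => ((hA.eigenvalues i ^ p : ℝ) : ℂ)) *
      star (hA.eigenvectorUnitary : Matrix ι ι ℂ)
  else 0

/-- Real part of the trace. -/
def retr {ι : Type*} [Fintype ι] (A : Matrix ι ι ℂ) : ℝ :=
  (Matrix.trace A).re

open scoped Classical in
/-- Classical Rényi divergence of order `α` of two (finitely supported) probability
mass functions, with value `+∞` when `α > 1` and absolute continuity fails. -/
def renyiDivE (α : ℝ) {k : ℕ} (p q : Fin k → ℝ) : EReal :=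
  if α < 1 ∨ ∀ i, q i = 0 → p i = 0 then
    (((α - 1)⁻¹ * Real.log (∑ i, p i ^ α * q i ^ (1 - α)) : ℝ) : EReal)
  else (⊤ : EReal)

/-- Measured Rényi divergence: supremum of classical Rényi divergences of the outcome
distributions over all finite POVMs. -/
def measuredRenyiDiv {ι : Type*} [Fintype ι] [DecidableEq ι]
    (α : ℝ) (ρ σ : Matrix ι ι ℂ) : EReal :=
  ⨆ (k : ℕ) (P : Fin k → Matrix ι ι ℂ) (_ : ∀ i, (P i).PosSemidef) (_ : ∑ i, P i = 1),
    renyiDivE α (fun i => retr (ρ * P i)) (fun i => retr (σ * P i))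

/-
Let `β = α / (α - 1)` be the exponent conjugate to `α`.

For `≥`, measure in an eigenbasis of `T`: with `l` the eigenvalues of `T`, both `Tr[ρT] = ∑ l p` and
`Tr[σ T^β] = ∑ l^β q` are functions of the two outcome distributions `p` and `q`, and Hölder's
inequality bounds the objective by the classical Rényi divergence of `p` and `q`.

For `≤`, equality holds in Hölder's inequality for the outcome distributions of a POVM `P` when `l`
is proportional to `(p / q)^(α - 1)`; since the objective is invariant under scaling, `l` can be
chosen in `[0, 1]`. Put `T = (∑ l^β P)^(1/β)`. Then `Tr[σ T^β] = ∑ l^β q`, and the operator Jensen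
inequality for the operator concave function `x ↦ x^(1/β)` gives `∑ l P ≤ T`, so that
`Tr[ρT] ≥ ∑ l p`. The Jensen inequality is obtained from the integral representation of `x^(1/β)`
and the operator convexity of the inverse, itself a completed square.
-/

section OperatorJensen

open MeasureTheory Real Set
open scoped NNReal Ring

variable {A : Type*} [CStarAlgebra A] [PartialOrder A] [StarOrderedRing A]

theorem cfcₙ_rpowIntegrand₀₁_eq_sub_smul_ringInverse {a : A} {p t : ℝ} (ha : 0 ≤ a)
    (hp : p ∈ Ioo 0 1) (ht : 0 < t) :
    cfcₙ (rpowIntegrand₀₁ p t) a =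
      algebraMap ℝ A (t ^ (p - 1)) - t ^ p • (algebraMap ℝ A t + a)⁻¹ʳ := by
  have hspectrum : ∀ r ∈ spectrum ℝ a, t + r ≠ 0 := by grind
  have hcont : ContinuousOn (fun z : ℝ => (t + z)⁻¹) (spectrum ℝ a) := by
    fun_prop (disch := grind)
  rw [cfcₙ_eq_cfc ((continuousOn_rpowIntegrand₀₁_Ici hp ht).mono (by grind))
      rpowIntegrand₀₁_zero_right, rpowIntegrand₀₁_eq_sub hp.2.ne ht,
    cfc_sub (fun _ : ℝ => t ^ (p - 1)) (fun z : ℝ => t ^ p * (t + z)⁻¹) a continuousOn_const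
      (continuousOn_const.mul hcont),
    cfc_const .., cfc_const_mul _ _ _ hcont, cfc_inv _ _ hspectrum .., cfc_const_add .., cfc_id' ..]

variable {κ : Type*} [Fintype κ]

theorem ringInverse_sum_star_mul_mul_le {x a : κ → A} (hx : ∑ i, star (x i) * x i = 1)
    (ha : ∀ i, IsStrictlyPositive (a i)) :
    (∑ i, star (x i) * a i * x i)⁻¹ʳ ≤ ∑ i, star (x i) * (a i)⁻¹ʳ * x i := by
  set S := ∑ i, star (x i) * a i * x i
  have hS : IsSelfAdjoint S := isSelfAdjoint_sum _ fun i _ => (ha i).isSelfAdjoint.conjugate' _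
  have hSinv : star S⁻¹ʳ = S⁻¹ʳ := hS.ringInverse
  have hSSS : S⁻¹ʳ * S * S⁻¹ʳ = S⁻¹ʳ := by
    by_cases hu : IsUnit S
    · rw [Ring.inverse_mul_cancel _ hu, one_mul]
    · simp [Ring.inverse_non_unit _ hu]
  have expand (i : κ) :
      star (x i * S⁻¹ʳ - (a i)⁻¹ʳ * x i) * a i * (x i * S⁻¹ʳ - (a i)⁻¹ʳ * x i) =
        S⁻¹ʳ * (star (x i) * a i * x i) * S⁻¹ʳ - S⁻¹ʳ * (star (x i) * x i)
          - star (x i) * x i * S⁻¹ʳ + star (x i) * (a i)⁻¹ʳ * x i := by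
    have hai : star (a i)⁻¹ʳ = (a i)⁻¹ʳ := (ha i).isSelfAdjoint.ringInverse
    simp only [star_sub, star_mul, hSinv, hai, sub_mul, mul_sub, mul_assoc,
      Ring.mul_inverse_cancel_left _ _ (ha i).isUnit,
      Ring.inverse_mul_cancel_left _ _ (ha i).isUnit]
    abel
  have completed_square :
      ∑ i, star (x i * S⁻¹ʳ - (a i)⁻¹ʳ * x i) * a i * (x i * S⁻¹ʳ - (a i)⁻¹ʳ * x i) =
        ∑ i, star (x i) * (a i)⁻¹ʳ * x i - S⁻¹ʳ := by
    simp only [expand, Finset.sum_add_distrib, Finset.sum_sub_distrib, ← Finset.mul_sum,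
      ← Finset.sum_mul, hx, mul_one, one_mul]
    rw [hSSS]
    abel
  rw [← sub_nonneg, ← completed_square]
  exact Finset.sum_nonneg fun i _ => star_left_conjugate_nonneg (ha i).nonneg _

theorem sum_star_mul_cfcₙ_rpowIntegrand₀₁_mul_le {x a : κ → A} {p t : ℝ}
    (hx : ∑ i, star (x i) * x i = 1) (ha : ∀ i, 0 ≤ a i) (hp : p ∈ Ioo 0 1) (ht : 0 < t) :
    ∑ i, star (x i) * cfcₙ (rpowIntegrand₀₁ p t) (a i) * x i ≤
      cfcₙ (rpowIntegrand₀₁ p t) (∑ i, star (x i) * a i * x i) := by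
  have conj_algebraMap (s : ℝ) : ∑ i, star (x i) * algebraMap ℝ A s * x i = algebraMap ℝ A s := by
    simp only [← Algebra.commutes, mul_assoc, ← Finset.mul_sum, hx, mul_one]
  have hsum : ∑ i, star (x i) * (algebraMap ℝ A t + a i) * x i =
      algebraMap ℝ A t + ∑ i, star (x i) * a i * x i := by
    simp only [mul_add, add_mul, Finset.sum_add_distrib, conj_algebraMap]
  have hpos (i : κ) : IsStrictlyPositive (algebraMap ℝ A t + a i) := by
    have := ha i
    grind
  have hinv := ringInverse_sum_star_mul_mul_le hx hpos
  rw [hsum] at hinv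
  rw [cfcₙ_rpowIntegrand₀₁_eq_sub_smul_ringInverse
    (Finset.sum_nonneg fun i _ => star_left_conjugate_nonneg (ha i) _) hp ht]
  simp only [cfcₙ_rpowIntegrand₀₁_eq_sub_smul_ringInverse (ha _) hp ht, mul_sub, sub_mul,
    Finset.sum_sub_distrib, conj_algebraMap, mul_smul_comm, smul_mul_assoc, ← Finset.smul_sum]
  gcongr

theorem sum_star_mul_rpow_mul_le {x a : κ → A} {p : ℝ} (hx : ∑ i, star (x i) * x i = 1)
    (ha : ∀ i, 0 ≤ a i) (hp : p ∈ Ioo 0 1) :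
    ∑ i, star (x i) * a i ^ p * x i ≤ (∑ i, star (x i) * a i * x i) ^ p := by
  lift p to ℝ≥0 using hp.1.le
  have hp' : p ∈ Ioo 0 1 := by exact_mod_cast hp
  obtain ⟨μ, hμ⟩ := CFC.exists_measure_nnrpow_eq_integral_cfcₙ_rpowIntegrand₀₁ A hp'
  have hsum : 0 ≤ ∑ i, star (x i) * a i * x i :=
    Finset.sum_nonneg fun i _ => star_left_conjugate_nonneg (ha i) _
  have integrable (i : κ) :
      IntegrableOn (fun t => star (x i) * cfcₙ (rpowIntegrand₀₁ p t) (a i) * x i) (Ioi 0) μ :=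
    ((hμ (a i) (ha i)).1.const_mul _).mul_const _
  simp only [← CFC.nnrpow_eq_rpow hp'.1]
  calc ∑ i, star (x i) * a i ^ p * x i
      = ∫ t in Ioi 0, ∑ i, star (x i) * cfcₙ (rpowIntegrand₀₁ p t) (a i) * x i ∂μ := by
        rw [integral_finsetSum _ fun i _ => integrable i]
        refine Finset.sum_congr rfl fun i _ => ?_
        obtain ⟨h_int, h_eq⟩ := hμ (a i) (ha i)
        rw [h_eq, integral_mul_const_of_integrable (h_int.const_mul _),
          integral_const_mul_of_integrable h_int]
    _ ≤ ∫ t in Ioi 0, cfcₙ (rpowIntegrand₀₁ p t) (∑ i, star (x i) * a i * x i) ∂μ :=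
        setIntegral_mono_on (integrable_finsetSum _ fun i _ => integrable i) (hμ _ hsum).1
          measurableSet_Ioi fun t ht => sum_star_mul_cfcₙ_rpowIntegrand₀₁_mul_le hx ha hp ht
    _ = (∑ i, star (x i) * a i * x i) ^ p := (hμ _ hsum).2.symm

theorem sum_rpow_smul_le_rpow_sum_smul {P : κ → A} {w : κ → ℝ} {p : ℝ} (hP : ∀ i, 0 ≤ P i)
    (hP_sum : ∑ i, P i = 1) (hw : ∀ i, 0 ≤ w i) (hp : p ∈ Ioo 0 1) :
    ∑ i, w i ^ p • P i ≤ (∑ i, w i • P i) ^ p := by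
  choose x hx using fun i => CStarAlgebra.nonneg_iff_eq_star_mul_self.1 (hP i)
  lift w to κ → ℝ≥0 using hw
  have conj_algebraMap (c : ℝ≥0) (i : κ) :
      star (x i) * algebraMap ℝ≥0 A c * x i = (c : ℝ) • P i := by
    rw [← Algebra.commutes, mul_assoc, ← hx, ← Algebra.smul_def, NNReal.smul_def]
  have := sum_star_mul_rpow_mul_le (a := fun i => algebraMap ℝ≥0 A (w i))
    (x := x) (by simpa only [hx] using hP_sum) (fun _ => algebraMap_nonneg A zero_le) hp
  simpa only [CFC.rpow_algebraMap, conj_algebraMap, NNReal.coe_rpow] using this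

end OperatorJensen

section ClassicalRenyi

variable {κ : Type*} [Fintype κ] {p q l : κ → ℝ} {α β : ℝ}

/-- The power sum `Q_α(p‖q) = ∑ i, p i ^ α * q i ^ (1 - α)`, whose logarithm divided by `α - 1` is
the classical Rényi divergence. When `α > 1` it is meaningful only if `p` vanishes wherever `q`
does, since `0 ^ (1 - α) = 0`. -/
def renyiSum (α : ℝ) (p q : κ → ℝ) : ℝ :=
  ∑ i, p i ^ α * q i ^ (1 - α)

theorem renyiSum_nonneg (hp : ∀ i, 0 ≤ p i) (hq : ∀ i, 0 ≤ q i) : 0 ≤ renyiSum α p q :=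
  Finset.sum_nonneg fun i _ => mul_nonneg (Real.rpow_nonneg (hp i) _) (Real.rpow_nonneg (hq i) _)

theorem renyiSum_pos (hp : ∀ i, 0 ≤ p i) (hq : ∀ i, 0 ≤ q i) (hac : ∀ i, q i = 0 → p i = 0)
    (hp0 : p ≠ 0) : 0 < renyiSum α p q := by
  obtain ⟨i, hi⟩ := Function.ne_iff.1 hp0
  have hpi : 0 < p i := (hp i).lt_of_ne' hi
  have hqi : 0 < q i := (hq i).lt_of_ne' (mt (hac i) hi)
  exact Finset.sum_pos' (fun j _ => mul_nonneg (Real.rpow_nonneg (hp j) _)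
    (Real.rpow_nonneg (hq j) _)) ⟨i, Finset.mem_univ i, by positivity⟩

theorem sum_mul_le_rpow_sum_mul_rpow_renyiSum (hαβ : α.HolderConjugate β) (hl : ∀ i, 0 ≤ l i)
    (hp : ∀ i, 0 ≤ p i) (hq : ∀ i, 0 ≤ q i) (hac : ∀ i, q i = 0 → p i = 0) :
    ∑ i, l i * p i ≤ (∑ i, l i ^ β * q i) ^ (1 / β) * renyiSum α p q ^ (1 / α) := by
  have hβ := hαβ.symm.pos.ne'
  have hprod (i : κ) : l i * p i = l i * q i ^ β⁻¹ * (p i * q i ^ (-β⁻¹)) := by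
    rcases (hq i).eq_or_lt with hqi | hqi
    · simp [hac i hqi.symm]
    · rw [Real.rpow_neg hqi.le]
      field_simp
  have hleft (i : κ) : l i ^ β * q i = (l i * q i ^ β⁻¹) ^ β := by
    rw [Real.mul_rpow (hl i) (Real.rpow_nonneg (hq i) _), Real.rpow_inv_rpow (hq i) hβ]
  have hright (i : κ) : p i ^ α * q i ^ (1 - α) = (p i * q i ^ (-β⁻¹)) ^ α := by
    rw [Real.mul_rpow (hp i) (Real.rpow_nonneg (hq i) _), ← Real.rpow_mul (hq i),
      ← neg_sub α 1, ← hαβ.div_conj_eq_sub_one, neg_mul, div_eq_inv_mul]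
  simp only [renyiSum, hprod, hleft, hright]
  exact Real.inner_le_Lp_mul_Lq_of_nonneg _ hαβ.symm
    (fun i _ => mul_nonneg (hl i) (Real.rpow_nonneg (hq i) _))
    (fun i _ => mul_nonneg (hp i) (Real.rpow_nonneg (hq i) _))

theorem mul_log_sub_log_le_log_renyiSum (hαβ : α.HolderConjugate β) (hl : ∀ i, 0 ≤ l i)
    (hp : ∀ i, 0 ≤ p i) (hq : ∀ i, 0 ≤ q i) (hac : ∀ i, q i = 0 → p i = 0)
    (hlp : 0 < ∑ i, l i * p i) :
    β * Real.log (∑ i, l i * p i) - Real.log (∑ i, l i ^ β * q i) ≤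
      (α - 1)⁻¹ * Real.log (renyiSum α p q) := by
  have hα := hαβ.pos
  have hβ := hαβ.symm.pos
  have hle := sum_mul_le_rpow_sum_mul_rpow_renyiSum hαβ hl hp hq hac
  have hlq_nonneg : 0 ≤ ∑ i, l i ^ β * q i :=
    Finset.sum_nonneg fun i _ => mul_nonneg (Real.rpow_nonneg (hl i) _) (hq i)
  have hprod := hlp.trans_le hle
  have hlq : 0 < ∑ i, l i ^ β * q i := hlq_nonneg.lt_of_ne' fun h => by
    simp [h, hβ.ne'] at hprod
  have hQ : 0 < renyiSum α p q := (renyiSum_nonneg hp hq).lt_of_ne' fun h => by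
    simp [h, hα.ne'] at hprod
  have hlog := Real.log_le_log hlp hle
  rw [Real.log_mul (by positivity) (by positivity), Real.log_rpow hlq, Real.log_rpow hQ] at hlog
  rw [sub_le_iff_le_add']
  calc β * Real.log (∑ i, l i * p i)
      ≤ β * (1 / β * Real.log (∑ i, l i ^ β * q i) + 1 / α * Real.log (renyiSum α p q)) := by
        gcongr
    _ = Real.log (∑ i, l i ^ β * q i) + (α - 1)⁻¹ * Real.log (renyiSum α p q) := by
        rw [← hαβ.div_conj_eq_sub_one]
        field_simp

theorem sum_div_rpow_mul_eq_renyiSum (hα : α ≠ 0) (hp : ∀ i, 0 ≤ p i) (hq : ∀ i, 0 ≤ q i)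
    (hac : ∀ i, q i = 0 → p i = 0) :
    ∑ i, (p i / q i) ^ (α - 1) * p i = renyiSum α p q := by
  refine Finset.sum_congr rfl fun i _ => ?_
  rcases (hp i).eq_or_lt with hpi | hpi
  · simp [← hpi, Real.zero_rpow hα]
  · have hqi : 0 < q i := (hq i).lt_of_ne' (mt (hac i) hpi.ne')
    rw [Real.div_rpow hpi.le hqi.le, ← neg_sub α 1, Real.rpow_neg hqi.le, Real.rpow_sub_one hpi.ne']
    field_simp

theorem sum_rpow_div_rpow_mul_eq_renyiSum (hαβ : α.HolderConjugate β) (hp : ∀ i, 0 ≤ p i)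
    (hq : ∀ i, 0 ≤ q i) (hac : ∀ i, q i = 0 → p i = 0) :
    ∑ i, ((p i / q i) ^ (α - 1)) ^ β * q i = renyiSum α p q := by
  refine Finset.sum_congr rfl fun i _ => ?_
  rw [← Real.rpow_mul (div_nonneg (hp i) (hq i)), hαβ.sub_one_mul_conj]
  rcases (hq i).eq_or_lt with hqi | hqi
  · simp [← hqi, hac i hqi.symm, Real.zero_rpow hαβ.ne_zero]
  · rw [Real.div_rpow (hp i) hqi.le, Real.rpow_sub hqi, Real.rpow_one]
    field_simp

theorem exists_mem_Icc_log_renyiSum_eq (hαβ : α.HolderConjugate β)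
    (hp : ∀ i, 0 ≤ p i) (hq : ∀ i, 0 ≤ q i) (hac : ∀ i, q i = 0 → p i = 0) (hp0 : p ≠ 0) :
    ∃ l : κ → ℝ, (∀ i, l i ∈ Set.Icc 0 1) ∧ 0 < ∑ i, l i * p i ∧
      (α - 1)⁻¹ * Real.log (renyiSum α p q) =
        β * Real.log (∑ i, l i * p i) - Real.log (∑ i, l i ^ β * q i) := by
  set u : κ → ℝ := fun i => (p i / q i) ^ (α - 1)
  have hu (i : κ) : 0 ≤ u i := Real.rpow_nonneg (div_nonneg (hp i) (hq i)) _
  have hu_sum : 0 ≤ ∑ i, u i := Finset.sum_nonneg fun i _ => hu i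
  set c : ℝ := (1 + ∑ i, u i)⁻¹
  have hc : 0 < c := by positivity
  have hQ : 0 < renyiSum α p q := renyiSum_pos hp hq hac hp0
  have hlp : ∑ i, c * u i * p i = c * renyiSum α p q := by
    simp only [mul_assoc, ← Finset.mul_sum, u, sum_div_rpow_mul_eq_renyiSum hαβ.ne_zero hp hq hac]
  have hlq : ∑ i, (c * u i) ^ β * q i = c ^ β * renyiSum α p q := by
    simp only [Real.mul_rpow hc.le (hu _), mul_assoc, ← Finset.mul_sum, u,
      sum_rpow_div_rpow_mul_eq_renyiSum hαβ hp hq hac]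
  refine ⟨fun i => c * u i, fun i => ⟨mul_nonneg hc.le (hu i), ?_⟩, ?_, ?_⟩
  · rw [inv_mul_le_one₀ (by positivity)]
    linarith [Finset.single_le_sum (fun i _ => hu i) (Finset.mem_univ i)]
  · rw [hlp]
    positivity
  · rw [hlp, hlq, Real.log_mul hc.ne' hQ.ne', Real.log_mul (by positivity) hQ.ne',
      Real.log_rpow hc, ← hαβ.div_conj_eq_sub_one, inv_div, hαβ.symm.div_conj_eq_sub_one]
    ring

end ClassicalRenyi

section TracePairing

variable {ι : Type*} [Fintype ι] {A B C : Matrix ι ι ℂ}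

theorem retr_mul_sum_smul {κ : Type*} [Fintype κ] (A : Matrix ι ι ℂ) (w : κ → ℝ)
    (P : κ → Matrix ι ι ℂ) : retr (A * ∑ i, w i • P i) = ∑ i, w i * retr (A * P i) := by
  simp [retr, Finset.mul_sum, Matrix.trace_sum]

theorem retr_conjTranspose_mul_self_mul_conjTranspose_mul_self (A B : Matrix ι ι ℂ) :
    retr (Aᴴ * A * (Bᴴ * B)) = retr ((A * Bᴴ)ᴴ * (A * Bᴴ)) := by
  simp only [retr, conjTranspose_mul, conjTranspose_conjTranspose, Matrix.mul_assoc]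
  rw [trace_mul_comm B]
  simp only [Matrix.mul_assoc]

theorem retr_conjTranspose_mul_self_nonneg (A : Matrix ι ι ℂ) : 0 ≤ retr (Aᴴ * A) :=
  (Complex.nonneg_iff.1 (posSemidef_conjTranspose_mul_self A).trace_nonneg).1

theorem retr_conjTranspose_mul_self_eq_zero_iff : retr (Aᴴ * A) = 0 ↔ A = 0 := by
  have him := (Complex.nonneg_iff.1 (posSemidef_conjTranspose_mul_self A).trace_nonneg).2
  rw [← trace_conjTranspose_mul_self_eq_zero_iff, Complex.ext_iff, ← him]
  simp [retr]

open scoped MatrixOrder in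
theorem exists_eq_conjTranspose_mul_self (hA : A.PosSemidef) : ∃ R : Matrix ι ι ℂ, A = Rᴴ * R := by
  classical exact CStarAlgebra.nonneg_iff_eq_star_mul_self.1 hA.nonneg

theorem retr_mul_nonneg (hA : A.PosSemidef) (hB : B.PosSemidef) : 0 ≤ retr (A * B) := by
  obtain ⟨R, rfl⟩ := exists_eq_conjTranspose_mul_self hA
  obtain ⟨S, rfl⟩ := exists_eq_conjTranspose_mul_self hB
  rw [retr_conjTranspose_mul_self_mul_conjTranspose_mul_self]
  exact retr_conjTranspose_mul_self_nonneg _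

theorem mul_eq_zero_of_retr_mul_eq_zero (hA : A.PosSemidef) (hB : B.PosSemidef)
    (h : retr (A * B) = 0) : A * B = 0 := by
  obtain ⟨R, rfl⟩ := exists_eq_conjTranspose_mul_self hA
  obtain ⟨S, rfl⟩ := exists_eq_conjTranspose_mul_self hB
  rw [retr_conjTranspose_mul_self_mul_conjTranspose_mul_self,
    retr_conjTranspose_mul_self_eq_zero_iff] at h
  rw [Matrix.mul_assoc, ← Matrix.mul_assoc R, h, Matrix.zero_mul, Matrix.mul_zero]

theorem retr_mul_eq_zero_of_ker_le (hA : A.PosSemidef) (hC : C.PosSemidef)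
    (hker : ∀ v, A *ᵥ v = 0 → B *ᵥ v = 0) (h : retr (A * C) = 0) : retr (B * C) = 0 := by
  have hAC := mul_eq_zero_of_retr_mul_eq_zero hA hC h
  have hBC : B * C = 0 := by
    ext i j
    have hcol : A *ᵥ C.col j = 0 := by
      ext k
      exact congrFun₂ hAC k j
    exact congrFun (hker _ hcol) i
  simp [hBC, retr]

open scoped MatrixOrder in
theorem retr_mul_le_retr_mul (hA : A.PosSemidef) (hBC : B ≤ C) : retr (A * B) ≤ retr (A * C) := by
  have h := retr_mul_nonneg hA (le_iff.1 hBC)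
  rw [Matrix.mul_sub, retr, trace_sub, Complex.sub_re] at h
  exact sub_nonneg.1 h

end TracePairing

/-- `P` is a positive operator-valued measure with outcomes in `κ`. -/
structure IsPOVM {κ ι : Type*} [Fintype κ] [Fintype ι] [DecidableEq ι] (P : κ → Matrix ι ι ℂ) :
    Prop where
  posSemidef : ∀ i, (P i).PosSemidef
  sum_eq_one : ∑ i, P i = 1

section Measurement

variable {κ ι : Type*} [Fintype κ] [Fintype ι] [DecidableEq ι] {P : κ → Matrix ι ι ℂ}
  {ρ σ A : Matrix ι ι ℂ} {α : ℝ}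

theorem IsPOVM.retr_mul_ne_zero (hP : IsPOVM P) (hρ : ρ.PosSemidef) (hρ0 : ρ ≠ 0) :
    (fun i => retr (ρ * P i)) ≠ 0 := by
  intro h
  apply hρ0
  rw [← Matrix.mul_one ρ, ← hP.sum_eq_one, Finset.mul_sum]
  exact Finset.sum_eq_zero fun i _ =>
    mul_eq_zero_of_retr_mul_eq_zero hρ (hP.posSemidef i) (congrFun h i)

theorem renyiDivE_eq_log_renyiSum {k : ℕ} {p q : Fin k → ℝ} (hac : ∀ i, q i = 0 → p i = 0) :
    renyiDivE α p q = ((α - 1)⁻¹ * Real.log (renyiSum α p q) : ℝ) :=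
  if_pos (Or.inr hac)

theorem IsPOVM.log_renyiSum_le_measuredRenyiDiv (hP : IsPOVM P)
    (hac : ∀ i, retr (σ * P i) = 0 → retr (ρ * P i) = 0) :
    (((α - 1)⁻¹ * Real.log (renyiSum α (fun i => retr (ρ * P i)) fun i => retr (σ * P i)) : ℝ) :
      EReal) ≤ measuredRenyiDiv α ρ σ := by
  let e := Fintype.equivFin κ
  have hsum : ∑ i, P (e.symm i) = 1 := by rw [e.symm.sum_comp P, hP.sum_eq_one]
  have hreindex : renyiSum α (fun i => retr (ρ * P i)) (fun i => retr (σ * P i)) =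
      renyiSum α (fun i => retr (ρ * P (e.symm i))) fun i => retr (σ * P (e.symm i)) :=
    (e.symm.sum_comp fun i => retr (ρ * P i) ^ α * retr (σ * P i) ^ (1 - α)).symm
  rw [hreindex, ← renyiDivE_eq_log_renyiSum fun i => hac (e.symm i)]
  exact le_iSup_of_le _ <| le_iSup_of_le (fun i => P (e.symm i)) <|
    le_iSup_of_le (fun i => hP.posSemidef (e.symm i)) <| le_iSup_of_le hsum le_rfl

/-- The rank-one projection onto the `j`-th vector of the eigenbasis of the Hermitian matrix `A`
chosen by Mathlib. -/
def eigenprojection (hA : A.IsHermitian) (j : ι) : Matrix ι ι ℂ :=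
  (hA.eigenvectorUnitary : Matrix ι ι ℂ) * single j j 1 *
    star (hA.eigenvectorUnitary : Matrix ι ι ℂ)

theorem isPOVM_eigenprojection (hA : A.IsHermitian) : IsPOVM (eigenprojection hA) where
  posSemidef j := by
    refine PosSemidef.mul_mul_conjTranspose_same ?_ _
    rw [← diagonal_single, posSemidef_diagonal_iff]
    exact Pi.single_nonneg.2 zero_le_one
  sum_eq_one := by
    simp only [eigenprojection, ← Finset.sum_mul, ← Finset.mul_sum, sum_single_one, mul_one]
    exact Unitary.coe_mul_star_self _

theorem cfc_eq_sum_smul_eigenprojection (hA : A.IsHermitian) (f : ℝ → ℝ) :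
    cfc f A = ∑ j, f (hA.eigenvalues j) • eigenprojection hA j := by
  have hdiag : diagonal (RCLike.ofReal ∘ f ∘ hA.eigenvalues) =
      ∑ j, f (hA.eigenvalues j) • single j j (1 : ℂ) := by
    simp [← sum_single_eq_diagonal, smul_single]
  simp only [hA.cfc_eq, IsHermitian.cfc, Unitary.conjStarAlgAut_apply, hdiag, eigenprojection,
    Finset.mul_sum, Finset.sum_mul, mul_smul_comm, smul_mul_assoc]

theorem rpowH_eq_cfc (hA : A.IsHermitian) (r : ℝ) : A.rpowH r = cfc (fun x : ℝ => x ^ r) A := by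
  rw [rpowH, dif_pos hA, hA.cfc_eq]
  rfl

theorem mul_log_sub_log_le_measuredRenyiDiv {β : ℝ} {T : Matrix ι ι ℂ} (hαβ : α.HolderConjugate β)
    (hρ : ρ.PosSemidef) (hσ : σ.PosSemidef) (hsupp : ∀ v, σ *ᵥ v = 0 → ρ *ᵥ v = 0)
    (hT : T.PosSemidef) (hρT : 0 < retr (ρ * T)) :
    ((β * Real.log (retr (ρ * T)) - Real.log (retr (σ * T.rpowH β)) : ℝ) : EReal) ≤
      measuredRenyiDiv α ρ σ := by
  set E := eigenprojection hT.isHermitian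
  have hE : IsPOVM E := isPOVM_eigenprojection hT.isHermitian
  have hac (j : ι) : retr (σ * E j) = 0 → retr (ρ * E j) = 0 :=
    retr_mul_eq_zero_of_ker_le hσ (hE.posSemidef j) hsupp
  have hT_eq : T = ∑ j, hT.isHermitian.eigenvalues j • E j := by
    rw [← cfc_eq_sum_smul_eigenprojection hT.isHermitian fun x => x,
      cfc_id' ℝ T hT.isHermitian.isSelfAdjoint]
  have hρT_eq : retr (ρ * T) = ∑ j, hT.isHermitian.eigenvalues j * retr (ρ * E j) := by
    rw [← retr_mul_sum_smul, ← hT_eq]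
  have hσT_eq : retr (σ * T.rpowH β) =
      ∑ j, hT.isHermitian.eigenvalues j ^ β * retr (σ * E j) := by
    rw [rpowH_eq_cfc hT.isHermitian, cfc_eq_sum_smul_eigenprojection hT.isHermitian,
      retr_mul_sum_smul]
  refine le_trans ?_ (hE.log_renyiSum_le_measuredRenyiDiv hac)
  rw [EReal.coe_le_coe_iff, hρT_eq, hσT_eq]
  exact mul_log_sub_log_le_log_renyiSum hαβ hT.eigenvalues_nonneg
    (fun j => retr_mul_nonneg hρ (hE.posSemidef j)) (fun j => retr_mul_nonneg hσ (hE.posSemidef j))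
    hac (hρT_eq ▸ hρT)

open scoped MatrixOrder Matrix.Norms.L2Operator

theorem rpowH_eq_rpow (hA : A.PosSemidef) (r : ℝ) : A.rpowH r = A ^ r := by
  rw [rpowH_eq_cfc hA.isHermitian, CFC.rpow_eq_cfc_real hA.nonneg]

theorem IsPOVM.exists_sum_smul_le (hP : IsPOVM P) {l : κ → ℝ} (hl : ∀ i, l i ∈ Set.Icc 0 1)
    {β : ℝ} (hβ : 1 < β) :
    ∃ T : Matrix ι ι ℂ, 0 ≤ T ∧ T ≤ 1 ∧ ∑ i, l i • P i ≤ T ∧ T.rpowH β = ∑ i, l i ^ β • P i := by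
  have hβ0 : 0 < β := one_pos.trans hβ
  have hP_nonneg (i : κ) : 0 ≤ P i := (hP.posSemidef i).nonneg
  have hlβ (i : κ) : l i ^ β ∈ Set.Icc 0 1 :=
    ⟨Real.rpow_nonneg (hl i).1 β, Real.rpow_le_one (hl i).1 (hl i).2 hβ0.le⟩
  set ω := ∑ i, l i ^ β • P i
  have hω : 0 ≤ ω := Finset.sum_nonneg fun i _ => smul_nonneg (hlβ i).1 (hP_nonneg i)
  have hω1 : ω ≤ 1 := by
    rw [← hP.sum_eq_one]
    exact Finset.sum_le_sum fun i _ => smul_le_of_le_one_left (hP_nonneg i) (hlβ i).2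
  have hβinv : β⁻¹ ∈ Set.Ioo 0 1 := ⟨inv_pos.2 hβ0, inv_lt_one_of_one_lt₀ hβ⟩
  have hT : 0 ≤ ω ^ β⁻¹ := CFC.rpow_nonneg
  refine ⟨ω ^ β⁻¹, hT, ?_, ?_, ?_⟩
  · simpa only [CFC.one_rpow] using CFC.rpow_le_rpow (Set.Ioo_subset_Icc_self hβinv) hω1
  · simpa only [Real.rpow_rpow_inv (hl _).1 hβ0.ne'] using
      sum_rpow_smul_le_rpow_sum_smul hP_nonneg hP.sum_eq_one (fun i => (hlβ i).1) hβinv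
  · rw [rpowH_eq_rpow hT.posSemidef,
      CFC.rpow_rpow_of_exponent_nonneg ω _ _ hβinv.1.le hβ0.le, inv_mul_cancel₀ hβ0.ne',
      CFC.rpow_one ω]

theorem IsPOVM.exists_log_renyiSum_le {β : ℝ} (hP : IsPOVM P) (hαβ : α.HolderConjugate β)
    (hρ : ρ.PosSemidef) (hρ0 : ρ ≠ 0) (hσ : σ.PosSemidef)
    (hac : ∀ i, retr (σ * P i) = 0 → retr (ρ * P i) = 0) :
    ∃ T : Matrix ι ι ℂ, (T.PosSemidef ∧ (1 - T).PosSemidef ∧ 0 < retr (ρ * T)) ∧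
      (α - 1)⁻¹ * Real.log (renyiSum α (fun i => retr (ρ * P i)) fun i => retr (σ * P i)) ≤
        β * Real.log (retr (ρ * T)) - Real.log (retr (σ * T.rpowH β)) := by
  obtain ⟨l, hl, hlp, hl_eq⟩ := exists_mem_Icc_log_renyiSum_eq hαβ
    (fun i => retr_mul_nonneg hρ (hP.posSemidef i)) (fun i => retr_mul_nonneg hσ (hP.posSemidef i))
    hac (hP.retr_mul_ne_zero hρ hρ0)
  obtain ⟨T, hT, hT1, hlT, hTβ⟩ := hP.exists_sum_smul_le hl hαβ.symm.lt
  have hρT : ∑ i, l i * retr (ρ * P i) ≤ retr (ρ * T) := by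
    rw [← retr_mul_sum_smul]
    exact retr_mul_le_retr_mul hρ hlT
  refine ⟨T, ⟨hT.posSemidef, le_iff.1 hT1, hlp.trans_le hρT⟩, ?_⟩
  rw [hl_eq, hTβ, retr_mul_sum_smul]
  have := hαβ.symm.nonneg
  gcongr

end Measurement

theorem measured_renyi_variational_gt_one_general
    {ι : Type*} [Fintype ι] [DecidableEq ι]
    (ρ σ : Matrix ι ι ℂ) (hρ : ρ.PosSemidef) (hρ0 : ρ ≠ 0) (hσ : σ.PosSemidef)
    (hsupp : ∀ v : ι → ℂ, σ.mulVec v = 0 → ρ.mulVec v = 0)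
    (α : ℝ) (hα : 1 < α) :
    measuredRenyiDiv α ρ σ =
      ⨆ (T : Matrix ι ι ℂ)
        (_ : T.PosSemidef ∧ (1 - T).PosSemidef ∧ 0 < retr (ρ * T)),
        ((α / (α - 1) * Real.log (retr (ρ * T))
          - Real.log (retr (σ * Matrix.rpowH T (α / (α - 1)))) : ℝ) : EReal) := by
  have hαβ : α.HolderConjugate (α / (α - 1)) := .conjExponent hα
  apply le_antisymm
  · refine iSup_le fun k => iSup_le fun P => iSup_le fun hP => iSup_le fun hP_sum => ?_
    have hac (i : Fin k) : retr (σ * P i) = 0 → retr (ρ * P i) = 0 :=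
      retr_mul_eq_zero_of_ker_le hσ (hP i) hsupp
    obtain ⟨T, hT, hle⟩ := IsPOVM.exists_log_renyiSum_le ⟨hP, hP_sum⟩ hαβ hρ hρ0 hσ hac
    rw [renyiDivE_eq_log_renyiSum hac]
    exact le_iSup₂_of_le T hT (EReal.coe_le_coe_iff.2 hle)
  · exact iSup₂_le fun T hT =>
      mul_log_sub_log_le_measuredRenyiDiv hαβ hρ hσ hsupp hT.1 hT.2.2

/-- variational expression for the measured Rényi divergence, `α > 1`.
`D_α^𝕄(ρ‖σ) = sup { (α/(α-1)) log Tr[ρT] - log Tr[σ T^{α/(α-1)}] : 0 ≤ T ≤ 𝟙, Tr[ρT] > 0 }`. -/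
theorem measured_renyi_variational_gt_one
    {ι : Type*} [Fintype ι] [DecidableEq ι]
    (ρ σ : Matrix ι ι ℂ)
    (hρ : ρ.PosSemidef) (hρtr : ρ.trace = 1)
    (hσ : σ.PosSemidef) (hσtr : σ.trace = 1)
    (hsupp : ∀ v : ι → ℂ, σ.mulVec v = 0 → ρ.mulVec v = 0)
    (α : ℝ) (hα : 1 < α) :
    measuredRenyiDiv α ρ σ =
      ⨆ (T : Matrix ι ι ℂ)
        (_ : T.PosSemidef ∧ (1 - T).PosSemidef ∧ 0 < retr (ρ * T)),
        ((α / (α - 1) * Real.log (retr (ρ * T))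
          - Real.log (retr (σ * Matrix.rpowH T (α / (α - 1)))) : ℝ) : EReal) := by
  refine measured_renyi_variational_gt_one_general ρ σ hρ (fun h => ?_) hσ hsupp α hα
  simp [h] at hρtr

end
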